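/- Let ζ ∈ [0,1) and let x : ℝ → E be a GDAM trajectory on [0,t♯], i.e. x'(t) = s_ζ(x(t)) with ∇f(x(t)) ≠ 0 and ∇g(x(t)) ≠ 0 on [0,t♯]. Suppose g(x(t)) < 0 for all t ∈ [0,t♯) and g(x(t♯)) = 0. Then the derivative of t ↦ g(x(t)) at t♯ (from the left) is nonnegative, and consequently cos θ(x(t♯)) ≤ −ζ. -/

import Mathlib

open RealInnerProductSpace

/-- at a solution point (first intersection with the constraint
boundary) the derivative of `t ↦ g(x(t))` is nonnegative and consequently
`cos θ(x(t♯)) ≤ -ζ`. -/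
theorem gdam_solution_point_cos {n : ℕ}
    (f g : EuclideanSpace ℝ (Fin n) → ℝ)
    (hf : ContDiff ℝ 2 f) (hg : ContDiff ℝ 2 g)
    (ζ : ℝ) (hζ : ζ ∈ Set.Ico (0 : ℝ) 1)
    (tsharp : ℝ) (ht : 0 < tsharp)
    (x : ℝ → EuclideanSpace ℝ (Fin n))
    (hgf : ∀ t ∈ Set.Icc (0 : ℝ) tsharp, gradient f (x t) ≠ 0)
    (hgg : ∀ t ∈ Set.Icc (0 : ℝ) tsharp, gradient g (x t) ≠ 0)
    (hx : ∀ t ∈ Set.Icc (0 : ℝ) tsharp, HasDerivAt x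
      (-(‖gradient f (x t)‖⁻¹ • gradient f (x t))
        - ζ • (‖gradient g (x t)‖⁻¹ • gradient g (x t))) t)
    (hneg : ∀ t ∈ Set.Ico (0 : ℝ) tsharp, g (x t) < 0)
    (hzero : g (x tsharp) = 0) :
    0 ≤ deriv (fun t => g (x t)) tsharp ∧
      ⟪gradient f (x tsharp), gradient g (x tsharp)⟫ /
        (‖gradient f (x tsharp)‖ * ‖gradient g (x tsharp)‖) ≤ -ζ := by
  have hmem : tsharp ∈ Set.Icc (0 : ℝ) tsharp := ⟨ht.le, le_rfl⟩
  have hF := norm_pos_iff.mpr (hgf _ hmem)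
  have hG := norm_pos_iff.mpr (hgg _ hmem)
  have hgd : DifferentiableAt ℝ g (x tsharp) := (hg.differentiable (by norm_num)) _
  have hd := hgd.hasGradientAt.hasFDerivAt.comp_hasDerivAt tsharp (hx _ hmem)
  have hd' : HasDerivAt (fun t => g (x t)) _ tsharp := hd
  have hnn : 0 ≤ deriv (fun t => g (x t)) tsharp := by
    have hs := (hasDerivAt_iff_tendsto_slope.mp hd'.differentiableAt.hasDerivAt).mono_left
      (nhdsWithin_mono tsharp (fun y (hy : y ∈ Set.Iio tsharp) => ne_of_lt hy))
    refine ge_of_tendsto hs ?_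
    filter_upwards [Ico_mem_nhdsLT ht] with t htt
    have h1 := hneg t htt
    rw [slope_def_field, hzero]
    exact div_nonneg_of_nonpos (by linarith) (by linarith [htt.2])
  refine ⟨hnn, ?_⟩
  rw [hd'.deriv] at hnn
  simp only [InnerProductSpace.toDual_apply_apply, inner_sub_right, inner_neg_right,
    inner_smul_right, real_inner_self_eq_norm_sq] at hnn
  rw [real_inner_comm] at hnn
  generalize ⟪gradient f (x tsharp), gradient g (x tsharp)⟫ = c at *
  generalize ‖gradient f (x tsharp)‖ = a at *
  generalize ‖gradient g (x tsharp)‖ = b at *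
  rw [div_le_iff₀ (by positivity)]
  have e : -(a⁻¹ * c) - ζ * (b⁻¹ * b ^ 2) = (-c - ζ * (a * b)) / a := by
    field_simp
  rw [e] at hnn
  have h2 := mul_nonneg hnn hF.le
  rw [div_mul_cancel₀ _ hF.ne'] at h2
  linarith
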